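/- Let n ≥ 1, let λ > 0, let f : ℝ^n → ℝ be a bounded Lipschitz function, and let g : ℝ^n → ℝ be a smooth positive bounded function with bounded second derivatives and ∫ g dγ = 1. Then ∫ (Q_1 f) g dγ − ∫ f dγ ≤ λ · ∫ g log g dγ + n(1 − λ + λ log λ) + (1/2)(1 − λ) ∫ Δg dγ (dual form of the refined dimensional Talagrand transportation inequality for the standard Gaussian measure; the case λ = 1 is the dual form of the classical Talagrand inequality). -/

import Mathlib

open MeasureTheory Real

noncomputable def gaussianMeasure (n : ℕ) : Measure (EuclideanSpace ℝ (Fin n)) :=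
  volume.withDensity fun x => ENNReal.ofReal ((2 * π) ^ (-(n : ℝ) / 2) * Real.exp (-‖x‖ ^ 2 / 2))

/-- Hopf-Lax (Hamilton-Jacobi) semigroup on `ℝ^n`. -/
noncomputable def hopfLax (n : ℕ) (t : ℝ) (f : EuclideanSpace ℝ (Fin n) → ℝ)
    (x : EuclideanSpace ℝ (Fin n)) : ℝ :=
  ⨅ y : EuclideanSpace ℝ (Fin n), (f y + ‖x - y‖ ^ 2 / (2 * t))

/-- Laplacian on `ℝ^n` as the sum of second derivatives in the coordinate directions. -/
noncomputable def laplacian (n : ℕ) (f : EuclideanSpace ℝ (Fin n) → ℝ)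
    (x : EuclideanSpace ℝ (Fin n)) : ℝ :=
  ∑ i : Fin n,
    fderiv ℝ (fderiv ℝ f) x (EuclideanSpace.single i 1) (EuclideanSpace.single i 1)

/-!
After disintegrating along the coordinates, a dual transport inequality between product measures
reduces to one between the factors, with additive constants. On the line, let `T` be the monotone
map pushing the standard Gaussian to the probability density proportional to
`exp ((q x - x ^ 2 / 2) / v)`. Inserting `log T' ≤ T' / v - 1 + log v` into the Monge–Ampère
equation and integrating by parts bounds `v log ∫ exp (q / v)` against the Gaussian of variance `v`;
keeping this variance free is what produces the parameter `λ = v`. Replacing that reference measure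
by the standard one tilts `q` by `(1 - v) ‖x‖ ^ 2 / 2`. The Gibbs variational principle then pairs
the tilted potential with the density `g`, and two Gaussian integrations by parts rewrite
`∫ ‖x‖ ^ 2 g` as `∫ Δg + n`.
-/

open Filter Topology ProbabilityTheory Set WithLp
open scoped NNReal RealInnerProductSpace

section HopfLax

theorem bddBelow_range_of_abs_le {X : Type*} {C : ℝ} {f : X → ℝ} (hf : ∀ x, |f x| ≤ C) :
    BddBelow (range f) :=
  ⟨-C, forall_mem_range.2 fun x => (abs_le.1 (hf x)).1⟩

variable {n : ℕ} {t : ℝ} {f : EuclideanSpace ℝ (Fin n) → ℝ}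

theorem hopfLax_le (ht : 0 < t) (hf : BddBelow (range f)) (x y : EuclideanSpace ℝ (Fin n)) :
    hopfLax n t f x ≤ f y + ‖x - y‖ ^ 2 / (2 * t) := by
  obtain ⟨m, hm⟩ := hf
  refine ciInf_le ⟨m, ?_⟩ y
  rintro _ ⟨z, rfl⟩
  exact (hm (mem_range_self z)).trans (le_add_of_nonneg_right (by positivity))

theorem abs_hopfLax_le {C : ℝ} (ht : 0 < t) (hf : ∀ x, |f x| ≤ C)
    (x : EuclideanSpace ℝ (Fin n)) : |hopfLax n t f x| ≤ C := by
  refine abs_le.2 ⟨le_ciInf fun y => ?_, ?_⟩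
  · exact (abs_le.1 (hf y)).1.trans (le_add_of_nonneg_right (by positivity))
  · calc hopfLax n t f x ≤ f x + ‖x - x‖ ^ 2 / (2 * t) :=
          hopfLax_le ht (bddBelow_range_of_abs_le hf) x x
      _ = f x := by simp
      _ ≤ C := (abs_le.1 (hf x)).2

-- Expanding the square shows that this function is a supremum of affine functions.
theorem convexOn_norm_sq_div_sub_hopfLax (ht : 0 < t) (hf : BddBelow (range f)) :
    ConvexOn ℝ univ fun x => ‖x‖ ^ 2 / (2 * t) - hopfLax n t f x := by
  refine ⟨convex_univ, fun x₁ _ x₂ _ a b ha hb hab => ?_⟩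
  simp only [smul_eq_mul]
  rw [sub_le_comm]
  refine le_ciInf fun y => ?_
  have h₁ := mul_le_mul_of_nonneg_left (hopfLax_le ht hf x₁ y) ha
  have h₂ := mul_le_mul_of_nonneg_left (hopfLax_le ht hf x₂ y) hb
  have hsq : ‖a • x₁ + b • x₂ - y‖ ^ 2 / (2 * t) = ‖a • x₁ + b • x₂‖ ^ 2 / (2 * t) +
      a * ((‖x₁ - y‖ ^ 2 - ‖x₁‖ ^ 2) / (2 * t)) + b * ((‖x₂ - y‖ ^ 2 - ‖x₂‖ ^ 2) / (2 * t)) := by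
    simp only [norm_sub_sq_real, inner_add_left, real_inner_smul_left]
    linear_combination -(‖y‖ ^ 2 / (2 * t)) * hab
  have hfy : f y = a * f y + b * f y := by rw [← add_mul, hab, one_mul]
  rw [hsq, hfy]
  simp only [sub_div]
  linarith

theorem continuous_hopfLax (ht : 0 < t) (hf : BddBelow (range f)) :
    Continuous (hopfLax n t f) := by
  have hconv := (convexOn_norm_sq_div_sub_hopfLax ht hf).locallyLipschitz.continuous
  have hsq : Continuous fun x : EuclideanSpace ℝ (Fin n) => ‖x‖ ^ 2 / (2 * t) := by fun_prop
  exact (hsq.sub hconv).congr fun x => sub_sub_cancel _ _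

end HopfLax

/-- The free energy `v log ∫ exp (q / v) dμ` of the potential `q` at temperature `v`. It is the
functional through which a relative entropy enters the dual of a transport-entropy inequality. -/
noncomputable def freeEnergy {X : Type*} [MeasurableSpace X] (μ : Measure X) (v : ℝ)
    (q : X → ℝ) : ℝ :=
  v * log (∫ x, exp (q x / v) ∂μ)

section FreeEnergy

variable {X Y : Type*} [MeasurableSpace X] [MeasurableSpace Y] {μ : Measure X} {ν : Measure Y}
  {v A : ℝ} {q : X → ℝ}

theorem integrable_exp_div_of_abs_le [IsFiniteMeasure μ] (hv : 0 < v) (hq : Measurable q)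
    (hA : ∀ x, |q x| ≤ A) : Integrable (fun x => exp (q x / v)) μ := by
  refine Integrable.of_bound (by fun_prop) (exp (A / v)) (.of_forall fun x => ?_)
  rw [norm_of_nonneg (exp_pos _).le]
  gcongr
  exact (abs_le.1 (hA x)).2

theorem exp_freeEnergy_div [NeZero μ] (hv : v ≠ 0)
    (hq : Integrable (fun x => exp (q x / v)) μ) :
    exp (freeEnergy μ v q / v) = ∫ x, exp (q x / v) ∂μ := by
  rw [freeEnergy, mul_div_cancel_left₀ _ hv, exp_log (integral_exp_pos hq)]

theorem abs_freeEnergy_le [IsProbabilityMeasure μ] (hv : 0 < v) (hq : Measurable q)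
    (hA : ∀ x, |q x| ≤ A) : |freeEnergy μ v q| ≤ A := by
  have hint := integrable_exp_div_of_abs_le (μ := μ) hv hq hA
  have hlower : exp (-A / v) ≤ ∫ x, exp (q x / v) ∂μ := by
    have := integral_mono (integrable_const (exp (-A / v))) hint fun x => by
      dsimp only
      gcongr
      exact (abs_le.1 (hA x)).1
    simpa using this
  have hupper : ∫ x, exp (q x / v) ∂μ ≤ exp (A / v) := by
    have := integral_mono hint (integrable_const (exp (A / v))) fun x => by
      dsimp only
      gcongr
      exact (abs_le.1 (hA x)).2
    simpa using this
  rw [← exp_freeEnergy_div hv.ne' hint, exp_le_exp] at hlower hupper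
  exact abs_le.2 ⟨(div_le_div_iff_of_pos_right hv).1 hlower,
    (div_le_div_iff_of_pos_right hv).1 hupper⟩

theorem freeEnergy_prod [SFinite μ] [SFinite ν] [NeZero ν] (hv : v ≠ 0) {q : X × Y → ℝ}
    (hint : Integrable (fun z => exp (q z / v)) (μ.prod ν))
    (hsection : ∀ x, Integrable (fun y => exp (q (x, y) / v)) ν) :
    freeEnergy (μ.prod ν) v q = freeEnergy μ v fun x => freeEnergy ν v fun y => q (x, y) := by
  conv_rhs => rw [freeEnergy]
  simp only [exp_freeEnergy_div hv (hsection _)]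
  rw [freeEnergy, integral_prod _ hint]

theorem continuous_freeEnergy_section {Z : Type*} [TopologicalSpace Z] [FirstCountableTopology Z]
    [TopologicalSpace Y] [OpensMeasurableSpace Y] [IsProbabilityMeasure ν] (hv : 0 < v)
    {q : Z × Y → ℝ} (hq : Continuous q) (hA : ∀ z, |q z| ≤ A) :
    Continuous fun x => freeEnergy ν v fun y => q (x, y) := by
  have hint : ∀ x, Integrable (fun y => exp (q (x, y) / v)) ν := fun x =>
    integrable_exp_div_of_abs_le hv
      (show Continuous fun y => q (x, y) by fun_prop).measurable fun y => hA (x, y)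
  have hcont : Continuous fun x => ∫ y, exp (q (x, y) / v) ∂ν := by
    refine continuous_of_dominated (bound := fun _ => exp (A / v))
      (fun x => (hint x).aestronglyMeasurable) (fun x => .of_forall fun y => ?_)
      (integrable_const _) (.of_forall fun y => by fun_prop)
    rw [norm_of_nonneg (exp_pos _).le]
    gcongr
    exact (abs_le.1 (hA _)).2
  exact continuous_const.mul (hcont.log fun x => (integral_exp_pos (hint x)).ne')

end FreeEnergy

/-- The dual (Bobkov–Götze) form of the transport-entropy inequality
`T_c(ρ, ν) ≤ v H(ρ | μ) + κ` for all `ρ`: the potentials `q`, `f` are admissible for the transport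
cost `c`. Test functions are bounded, with `q` continuous and `f` merely measurable; these are the
classes preserved by the partial integrations in `DualTransportInequality.prod`. -/
def DualTransportInequality {X Y : Type*} [TopologicalSpace X] [MeasurableSpace X]
    [MeasurableSpace Y] (μ : Measure X) (ν : Measure Y) (c : X → Y → ℝ) (v κ : ℝ) : Prop :=
  ∀ ⦃q : X → ℝ⦄ ⦃f : Y → ℝ⦄ ⦃A B : ℝ⦄, Continuous q → Measurable f → (∀ x, |q x| ≤ A) →
    (∀ y, |f y| ≤ B) → (∀ x y, q x - f y ≤ c x y) → freeEnergy μ v q ≤ ∫ y, f y ∂ν + κ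

namespace DualTransportInequality

variable {X X₁ X₂ Y Y₁ Y₂ : Type*}
  [TopologicalSpace X] [MeasurableSpace X] [MeasurableSpace Y]
  [TopologicalSpace X₁] [MeasurableSpace X₁] [MeasurableSpace Y₁]
  [TopologicalSpace X₂] [MeasurableSpace X₂] [MeasurableSpace Y₂]
  {μ : Measure X} {ν : Measure Y} {μ₁ : Measure X₁} {ν₁ : Measure Y₁}
  {μ₂ : Measure X₂} {ν₂ : Measure Y₂} {c : X → Y → ℝ} {c₁ : X₁ → Y₁ → ℝ} {c₂ : X₂ → Y₂ → ℝ}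
  {v κ κ₁ κ₂ : ℝ}

theorem map [OpensMeasurableSpace X₁] [BorelSpace X₂]
    (h : DualTransportInequality μ₁ ν₁ c₁ v κ) {e : X₁ → X₂} (he : Continuous e)
    {e' : Y₁ → Y₂} (he' : Measurable e') (hc : ∀ x y, c₂ (e x) (e' y) ≤ c₁ x y) :
    DualTransportInequality (μ₁.map e) (ν₁.map e') c₂ v κ := by
  intro q f A B hq hf hA hB hqf
  have hexp : Continuous fun x => exp (q x / v) := by fun_prop
  rw [freeEnergy, integral_map he.measurable.aemeasurable hexp.measurable.aestronglyMeasurable,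
    integral_map he'.aemeasurable hf.aestronglyMeasurable]
  exact h (hq.comp he) (hf.comp he') (fun x => hA _) (fun y => hB _)
    fun x y => (hqf _ _).trans (hc x y)

/-- One optimizes first in the second variables with the first ones frozen; the resulting free
energy and average are admissible potentials for the first cost. -/
theorem prod [FirstCountableTopology X₁] [OpensMeasurableSpace X₂]
    [OpensMeasurableSpace (X₁ × X₂)] [IsProbabilityMeasure μ₁]
    [IsProbabilityMeasure μ₂] [IsProbabilityMeasure ν₁] [IsProbabilityMeasure ν₂] (hv : 0 < v)
    (h₁ : DualTransportInequality μ₁ ν₁ c₁ v κ₁) (h₂ : DualTransportInequality μ₂ ν₂ c₂ v κ₂) :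
    DualTransportInequality (μ₁.prod μ₂) (ν₁.prod ν₂)
      (fun x y => c₁ x.1 y.1 + c₂ x.2 y.2) v (κ₁ + κ₂) := by
  intro q f A B hq hf hA hB hqf
  have hq₂ : ∀ s, Continuous fun x => q (s, x) := fun s => by fun_prop
  have hf₂ : ∀ t, Integrable (fun y => f (t, y)) ν₂ := fun t =>
    .of_bound (hf.comp measurable_prodMk_left).aestronglyMeasurable B (.of_forall fun y => hB _)
  let Q : X₁ → ℝ := fun s => freeEnergy μ₂ v fun x => q (s, x)
  let F : Y₁ → ℝ := fun t => ∫ y, f (t, y) ∂ν₂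
  have hFB : ∀ t, |F t| ≤ B := fun t => by
    simpa using norm_integral_le_of_norm_le_const (μ := ν₂) (f := fun y => f (t, y))
      (.of_forall fun y => hB _)
  have hF : Measurable F := (hf.stronglyMeasurable.integral_prod_right').measurable
  have hQF : ∀ s t, Q s - (F t + κ₂) ≤ c₁ s t := fun s t => by
    have := h₂ (hq₂ s) (f := fun y => f (t, y) + c₁ s t)
      ((hf.comp measurable_prodMk_left).add_const _) (fun x => hA _)
      (fun y => (abs_add_le _ _).trans (add_le_add_left (hB (t, y)) _))
      fun x y => by linarith [hqf (s, x) (t, y)]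
    rw [integral_add (hf₂ t) (integrable_const _), integral_const, probReal_univ, one_smul] at this
    linarith
  calc freeEnergy (μ₁.prod μ₂) v q = freeEnergy μ₁ v Q :=
        freeEnergy_prod hv.ne' (integrable_exp_div_of_abs_le hv hq.measurable hA) fun s =>
          integrable_exp_div_of_abs_le hv (hq₂ s).measurable fun x => hA _
    _ ≤ ∫ t, (F t + κ₂) ∂ν₁ + κ₁ :=
        h₁ (continuous_freeEnergy_section hv hq hA) (hF.add_const κ₂)
          (fun s => abs_freeEnergy_le hv (hq₂ s).measurable fun x => hA _)
          (fun t => (abs_add_le _ _).trans (add_le_add_left (hFB t) _)) hQF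
    _ = ∫ y, f y ∂ν₁.prod ν₂ + (κ₁ + κ₂) := by
        rw [integral_add (.of_bound hF.aestronglyMeasurable B (.of_forall hFB))
          (integrable_const _), integral_prod _ (.of_bound hf.aestronglyMeasurable B
          (.of_forall hB)), integral_const, probReal_univ, one_smul]
        ring

theorem pi [SecondCountableTopology X] [BorelSpace X] [IsProbabilityMeasure μ]
    [IsProbabilityMeasure ν] (hv : 0 < v) (h : DualTransportInequality μ ν c v κ) (n : ℕ) :
    DualTransportInequality (Measure.pi fun _ : Fin n => μ) (Measure.pi fun _ : Fin n => ν)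
      (fun x y => ∑ i, c (x i) (y i)) v (n * κ) := by
  induction n with
  | zero =>
    intro q f A B _ _ _ _ hqf
    simp only [freeEnergy, Measure.pi_of_empty _ default, integral_dirac, log_exp]
    have h : q default ≤ f default := by simpa using hqf default default
    simpa [mul_div_cancel₀ _ hv.ne'] using h
  | succ n ih =>
    have hμ := (measurePreserving_piFinSuccAbove (fun _ : Fin (n + 1) => μ) 0).symm.map_eq
    have hν := (measurePreserving_piFinSuccAbove (fun _ : Fin (n + 1) => ν) 0).symm.map_eq
    rw [← hμ, ← hν]
    rw [show ((n + 1 : ℕ) : ℝ) * κ = κ + n * κ by push_cast; ring]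
    refine (h.prod hv ih).map ?_ (MeasurableEquiv.measurable _) fun x y => ?_
    · exact .finInsertNth (A := fun _ => X) 0 continuous_fst continuous_snd
    · simp [Fin.sum_univ_succ]

end DualTransportInequality

section GaussianIntegrationByParts

theorem integral_withDensity_ofReal {X : Type*} [MeasurableSpace X] {μ : Measure X} {w : X → ℝ}
    (hw : Measurable w) (hw₀ : ∀ x, 0 ≤ w x) (φ : X → ℝ) :
    ∫ x, φ x ∂μ.withDensity (fun x => ENNReal.ofReal (w x)) = ∫ x, w x * φ x ∂μ := by
  rw [integral_withDensity_eq_integral_toReal_smul hw.ennreal_ofReal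
    (.of_forall fun _ => ENNReal.ofReal_lt_top)]
  simp only [ENNReal.toReal_ofReal (hw₀ _), smul_eq_mul]

theorem integrable_withDensity_ofReal_iff {X : Type*} [MeasurableSpace X] {μ : Measure X}
    {w φ : X → ℝ} (hw : Measurable w) (hw₀ : ∀ x, 0 ≤ w x) :
    Integrable φ (μ.withDensity fun x => ENNReal.ofReal (w x)) ↔
      Integrable (fun x => w x * φ x) μ := by
  rw [integrable_withDensity_iff_integrable_smul' hw.ennreal_ofReal
    (.of_forall fun _ => ENNReal.ofReal_lt_top)]
  simp only [ENNReal.toReal_ofReal (hw₀ _), smul_eq_mul]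

variable {E : Type*} [NormedAddCommGroup E] [InnerProductSpace ℝ E]

theorem hasFDerivAt_exp_neg_norm_sq_div_two (x : E) :
    HasFDerivAt (fun x : E => exp (-‖x‖ ^ 2 / 2)) (-exp (-‖x‖ ^ 2 / 2) • innerSL ℝ x) x := by
  simp only [div_eq_mul_inv]
  exact ((hasStrictFDerivAt_norm_sq x).hasFDerivAt.fun_neg.mul_const (2⁻¹ : ℝ)).exp.congr_fderiv
    (by module)

theorem integral_fderiv_eq_integral_inner_mul [FiniteDimensional ℝ E] [MeasurableSpace E]
    [BorelSpace E] {μ : Measure E} {c : ℝ} (hc : 0 ≤ c)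
    (hμ : μ = volume.withDensity fun x => ENNReal.ofReal (c * exp (-‖x‖ ^ 2 / 2)))
    {φ : E → ℝ} {e : E} (hφ : Differentiable ℝ φ) (hφμ : Integrable φ μ)
    (hdφ : Integrable (fun x => fderiv ℝ φ x e) μ) (hxφ : Integrable (fun x => ⟪x, e⟫ * φ x) μ) :
    ∫ x, fderiv ℝ φ x e ∂μ = ∫ x, ⟪x, e⟫ * φ x ∂μ := by
  let w : E → ℝ := fun x => c * exp (-‖x‖ ^ 2 / 2)
  have hw : Measurable w := by fun_prop
  have hw₀ : ∀ x, 0 ≤ w x := fun x => mul_nonneg hc (exp_pos _).le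
  have hdw : ∀ x, HasFDerivAt w (c • -exp (-‖x‖ ^ 2 / 2) • innerSL ℝ x) x := fun x =>
    (hasFDerivAt_exp_neg_norm_sq_div_two x).const_mul c
  have hweight : ∀ x, fderiv ℝ w x e * φ x = -(w x * (⟪x, e⟫ * φ x)) := fun x => by
    simp only [(hdw x).fderiv, smul_apply, innerSL_apply_apply, smul_eq_mul, w]
    ring
  subst hμ
  rw [integrable_withDensity_ofReal_iff hw hw₀] at hφμ hdφ hxφ
  rw [integral_withDensity_ofReal hw hw₀, integral_withDensity_ofReal hw hw₀,
    integral_mul_fderiv_eq_neg_fderiv_mul_of_integrable _ hdφ hφμ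
      (fun x _ => (hdw x).differentiableAt) fun x _ => hφ x]
  · simp only [hweight, integral_neg, neg_neg]
  · simpa only [hweight] using hxφ.fun_neg

theorem integral_deriv_gaussianReal {φ : ℝ → ℝ} (hφ : Differentiable ℝ φ)
    (hφγ : Integrable φ (gaussianReal 0 1)) (hdφ : Integrable (deriv φ) (gaussianReal 0 1))
    (hxφ : Integrable (fun x => x * φ x) (gaussianReal 0 1)) :
    ∫ x, deriv φ x ∂gaussianReal 0 1 = ∫ x, x * φ x ∂gaussianReal 0 1 := by
  have hdensity : gaussianReal 0 1 = volume.withDensity fun x : ℝ =>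
      ENNReal.ofReal ((√(2 * π))⁻¹ * exp (-‖x‖ ^ 2 / 2)) := by
    rw [gaussianReal_of_var_ne_zero 0 one_ne_zero]
    congr 1 with x
    simp [gaussianPDF, gaussianPDFReal]
  have hibp := integral_fderiv_eq_integral_inner_mul (by positivity) hdensity (e := 1) hφ hφγ
    (by simpa only [fderiv_apply_one_eq_deriv] using hdφ) (by simpa using hxφ)
  simpa using hibp

theorem integral_sq_gaussianReal (v : ℝ≥0) : ∫ x, x ^ 2 ∂gaussianReal 0 v = v := by
  have hvar := variance_fun_id_gaussianReal (μ := 0) (v := v)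
  rw [variance_eq_integral (by fun_prop)] at hvar
  simpa using hvar

end GaussianIntegrationByParts

section MonotoneTransport

theorem setIntegral_pos_of_pos {X : Type*} [MeasurableSpace X] {μ : Measure X} {w : X → ℝ}
    {s : Set X} (hw : ∀ x, 0 < w x) (hint : IntegrableOn w s μ) (hs : μ s ≠ 0) :
    0 < ∫ x in s, w x ∂μ := by
  rw [setIntegral_pos_iff_support_of_nonneg_ae (.of_forall fun x => (hw x).le) hint,
    Function.support_eq_univ fun x => (hw x).ne', univ_inter]
  exact pos_iff_ne_zero.2 hs

theorem hasDerivAt_setIntegral_Iic {w : ℝ → ℝ} {y : ℝ} (hint : Integrable w) (hw : Continuous w) :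
    HasDerivAt (fun y => ∫ t in Iic y, w t) (w y) y := by
  have hsplit : (fun y => ∫ t in Iic y, w t) =
      fun y => (∫ t in Iic 0, w t) + ∫ t in (0 : ℝ)..y, w t := by
    ext y
    rw [← intervalIntegral.integral_Iic_sub_Iic hint.integrableOn hint.integrableOn,
      add_sub_cancel]
  rw [hsplit]
  exact (hw.integral_hasStrictDerivAt 0 y).hasDerivAt.const_add _

/-- The map `T` is defined by matching the cumulative distribution functions, after normalizing
the mass of `p` on `[a, b]` to one. -/
theorem exists_transport_to_interval {w p : ℝ → ℝ} (hw : Continuous w) (hw₀ : ∀ y, 0 < w y)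
    (hwint : Integrable w) (hw₁ : ∫ y, w y = 1) (hp : Continuous p) (hp₀ : ∀ x, 0 < p x)
    {a b : ℝ} (hab : a < b) :
    ∃ T : ℝ → ℝ, ∀ y, T y ∈ Icc a b ∧
      HasDerivAt T ((∫ x in a..b, p x) * w y / p (T y)) y := by
  set Z := ∫ x in a..b, p x
  have hZ₀ : 0 < Z :=
    intervalIntegral.intervalIntegral_pos_of_pos (hp.intervalIntegrable _ _) hp₀ hab
  let G : ℝ → ℝ := fun x => ∫ t in a..x, p t
  have hG : ∀ x, HasDerivAt G (p x) x := fun x => (hp.integral_hasStrictDerivAt a x).hasDerivAt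
  have hGcont : Continuous G := continuous_iff_continuousAt.2 fun x => (hG x).continuousAt
  have hGmono : StrictMono G := strictMono_of_deriv_pos fun x => (hG x).deriv.symm ▸ hp₀ x
  have hGemb : IsEmbedding G :=
    hGmono.isEmbedding_of_ordConnected (isPreconnected_range hGcont).ordConnected
  let W : ℝ → ℝ := fun y => ∫ t in Iic y, w t
  have hW : ∀ y, HasDerivAt W (w y) y := fun y => hasDerivAt_setIntegral_Iic hwint hw
  have hWpos : ∀ y, 0 < W y := fun y => setIntegral_pos_of_pos hw₀ hwint.integrableOn (by simp)
  have hWlt : ∀ y, W y < 1 := fun y => by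
    have htail : 0 < ∫ t in Ioi y, w t :=
      setIntegral_pos_of_pos hw₀ hwint.integrableOn (by simp)
    have hsum := intervalIntegral.integral_Iic_add_Ioi (b := y) hwint.integrableOn
      hwint.integrableOn
    linarith
  have hexists : ∀ y, ∃ x ∈ Icc a b, G x = Z * W y := fun y => by
    refine intermediate_value_Icc hab.le hGcont.continuousOn ⟨?_, ?_⟩
    · simpa only [G, intervalIntegral.integral_same] using (mul_pos hZ₀ (hWpos y)).le
    · exact mul_le_of_le_one_right hZ₀.le (hWlt y).le
  choose T hTmem hGT using hexists
  have hTcont : Continuous T := hGemb.continuous_iff.2 <| by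
    simpa only [Function.comp_def, hGT] using continuous_iff_continuousAt.2 fun y =>
      ((hW y).const_mul Z).continuousAt
  exact ⟨T, fun y => ⟨hTmem y, .of_comp_left hTcont.continuousAt (hG (T y)) ((hW y).const_mul Z)
    (hp₀ _).ne' (.of_forall hGT)⟩⟩

end MonotoneTransport

section GaussianLine

theorem gaussianPDFReal_le (m : ℝ) (v : ℝ≥0) (y : ℝ) :
    gaussianPDFReal m v y ≤ (√(2 * π * v))⁻¹ :=
  mul_le_of_le_one_right (by positivity) <|
    exp_le_one_iff.2 (div_nonpos_of_nonpos_of_nonneg (by simp [sq_nonneg]) (by positivity))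

theorem log_gaussianPDFReal_zero_one (y : ℝ) :
    log (gaussianPDFReal 0 1 y) = -(log (2 * π) + y ^ 2) / 2 := by
  rw [gaussianPDFReal, log_mul (by positivity) (exp_ne_zero _), log_inv, log_exp,
    log_sqrt (by positivity)]
  simp only [NNReal.coe_one, sub_zero, mul_one]
  ring

theorem mul_log_le_sub_add_mul_log {t v : ℝ} (hv : 0 < v) (ht : 0 < t) :
    v * log t ≤ t - v + v * log v := by
  have htangent := mul_le_mul_of_nonneg_left (log_le_sub_one_of_pos (div_pos ht hv)) hv.le
  rw [log_div ht.ne' hv.ne', mul_sub, mul_sub, mul_div_cancel₀ _ hv.ne'] at htangent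
  linarith

theorem exists_gaussian_transport_to_interval {p : ℝ → ℝ} (hp : Continuous p)
    (hp₀ : ∀ x, 0 < p x) {a b : ℝ} (hab : a < b) :
    ∃ T : ℝ → ℝ, (∀ y, deriv T y = (∫ x in a..b, p x) * gaussianPDFReal 0 1 y / p (T y)) ∧
      Integrable (fun y => deriv T y - y * T y) (gaussianReal 0 1) ∧
      ∫ y, (deriv T y - y * T y) ∂gaussianReal 0 1 = 0 := by
  set Z := ∫ x in a..b, p x
  have hZ₀ : 0 ≤ Z := intervalIntegral.integral_nonneg hab.le fun x _ => (hp₀ x).le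
  obtain ⟨T, hT⟩ := exists_transport_to_interval
    (show Continuous (gaussianPDFReal 0 1) by rw [gaussianPDFReal_def]; fun_prop)
    (fun y => gaussianPDFReal_pos 0 1 y one_ne_zero) (integrable_gaussianPDFReal 0 1)
    (integral_gaussianPDFReal_eq_one 0 one_ne_zero) hp hp₀ hab
  have hTdiff : Differentiable ℝ T := fun y => (hT y).2.differentiableAt
  have hTmeas : AEStronglyMeasurable T (gaussianReal 0 1) := hTdiff.continuous.aestronglyMeasurable
  have hTbdd : ∀ y, ‖T y‖ ≤ max |a| |b| := fun y => abs_le_max_abs_abs (hT y).1.1 (hT y).1.2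
  obtain ⟨x₀, -, hx₀⟩ := isCompact_Icc.exists_isMinOn (nonempty_Icc.2 hab.le) hp.continuousOn
  have hdTbdd : ∀ y, ‖deriv T y‖ ≤ Z * (√(2 * π * (1 : ℝ≥0)))⁻¹ / p x₀ := fun y => by
    rw [(hT y).2.deriv, norm_of_nonneg (div_nonneg
      (mul_nonneg hZ₀ (gaussianPDFReal_nonneg 0 1 y)) (hp₀ _).le)]
    exact div_le_div₀ (by positivity)
      (mul_le_mul_of_nonneg_left (gaussianPDFReal_le 0 1 y) hZ₀) (hp₀ _) (hx₀ (hT y).1)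
  have hdTint : Integrable (deriv T) (gaussianReal 0 1) :=
    .of_bound (measurable_deriv T).aestronglyMeasurable _ (.of_forall hdTbdd)
  have hyTint : Integrable (fun y => y * T y) (gaussianReal 0 1) :=
    ((memLp_id_gaussianReal 1).integrable le_rfl).mul_bdd hTmeas (.of_forall hTbdd)
  refine ⟨T, fun y => (hT y).2.deriv, hdTint.sub hyTint, ?_⟩
  rw [integral_sub hdTint hyTint, integral_deriv_gaussianReal hTdiff
    (.of_bound hTmeas _ (.of_forall hTbdd)) hdTint hyTint, sub_self]

/-- Transport the Gaussian to the density proportional to `exp (ψ / v)` by a map `T` and apply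
`log t ≤ t - 1` to `t = T' / v`; by integration by parts, `T' y - y * T y` has integral zero. -/
theorem mul_log_intervalIntegral_exp_le {v : ℝ} (hv : 0 < v) {ψ φ : ℝ → ℝ} (hψ : Continuous ψ)
    (hφ : Integrable φ (gaussianReal 0 1)) (hψφ : ∀ x y, ψ x + x * y ≤ φ y) {a b : ℝ}
    (hab : a < b) :
    v * log (∫ x in a..b, exp (ψ x / v)) ≤
      ∫ y, φ y ∂gaussianReal 0 1 + (v / 2 * (log (2 * π) - 1) + v * log v) := by
  set γ := gaussianReal 0 1
  have hp : Continuous fun x => exp (ψ x / v) := by fun_prop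
  obtain ⟨T, hT, hTint, hT₀⟩ :=
    exists_gaussian_transport_to_interval hp (fun x => exp_pos (ψ x / v)) hab
  set Z := ∫ x in a..b, exp (ψ x / v)
  have hZ₀ : 0 < Z := intervalIntegral.intervalIntegral_pos_of_pos
    (hp.intervalIntegrable _ _) (fun x => exp_pos _) hab
  have hpointwise : ∀ y, v * log Z ≤ (deriv T y - y * T y) + φ y +
      (v / 2 * y ^ 2 + (v / 2 * log (2 * π) + v * log v - v)) := fun y => by
    have hw₀ : 0 < gaussianPDFReal 0 1 y := gaussianPDFReal_pos 0 1 y one_ne_zero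
    have hdT₀ : 0 < deriv T y := hT y ▸ div_pos (mul_pos hZ₀ hw₀) (exp_pos _)
    have hlog : log (deriv T y) = log Z - (log (2 * π) + y ^ 2) / 2 - ψ (T y) / v := by
      rw [hT, log_div (by positivity) (exp_ne_zero _), log_exp, log_mul hZ₀.ne' hw₀.ne',
        log_gaussianPDFReal_zero_one]
      ring
    have hvψ : v * (ψ (T y) / v) = ψ (T y) := mul_div_cancel₀ _ hv.ne'
    have htangent := mul_log_le_sub_add_mul_log hv hdT₀
    rw [hlog] at htangent
    linarith [hψφ (T y) y]
  have hsq : Integrable (fun y => v / 2 * y ^ 2) γ :=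
    (memLp_id_gaussianReal 2).integrable_sq.const_mul _
  have hconst := integrable_const (μ := γ) (v / 2 * log (2 * π) + v * log v - v)
  have hTφ := hTint.fun_add hφ
  have hsqc := hsq.fun_add hconst
  calc v * log Z = ∫ _, v * log Z ∂γ := by simp
    _ ≤ ∫ y, (deriv T y - y * T y) + φ y +
        (v / 2 * y ^ 2 + (v / 2 * log (2 * π) + v * log v - v)) ∂γ :=
      integral_mono (integrable_const _) (hTφ.add hsqc) hpointwise
    _ = ∫ y, φ y ∂γ + (v / 2 * (log (2 * π) - 1) + v * log v) := by
      rw [integral_add hTφ hsqc, integral_add hTint hφ,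
        integral_add hsq hconst, hT₀, integral_const_mul, integral_sq_gaussianReal]
      simp only [integral_const, probReal_univ, one_smul, NNReal.coe_one]
      ring

theorem mul_log_integral_exp_le {v : ℝ} (hv : 0 < v) {ψ φ : ℝ → ℝ} (hψ : Continuous ψ)
    (hψv : Integrable fun x => exp (ψ x / v)) (hφ : Integrable φ (gaussianReal 0 1))
    (hψφ : ∀ x y, ψ x + x * y ≤ φ y) :
    v * log (∫ x, exp (ψ x / v)) ≤
      ∫ y, φ y ∂gaussianReal 0 1 + (v / 2 * (log (2 * π) - 1) + v * log v) := by
  have hlim : Tendsto (fun R : ℝ => v * log (∫ x in -R..R, exp (ψ x / v))) atTop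
      (𝓝 (v * log (∫ x, exp (ψ x / v)))) :=
    ((intervalIntegral_tendsto_integral hψv tendsto_neg_atTop_atBot tendsto_id).log
      (integral_exp_pos hψv).ne').const_mul v
  exact le_of_tendsto hlim ((eventually_gt_atTop 0).mono fun R hR =>
    mul_log_intervalIntegral_exp_le hv hψ hφ hψφ (neg_lt_self hR))

theorem integral_exp_div_gaussianReal {v : ℝ≥0} (hv : v ≠ 0) (q : ℝ → ℝ) :
    ∫ x, exp (q x / v) ∂gaussianReal 0 v =
      (√(2 * π * v))⁻¹ * ∫ x, exp ((q x - x ^ 2 / 2) / v) := by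
  have hv₀ : (v : ℝ) ≠ 0 := NNReal.coe_ne_zero.2 hv
  rw [integral_gaussianReal_eq_integral_smul hv, ← integral_const_mul]
  congr 1 with x
  rw [gaussianPDFReal, smul_eq_mul, mul_assoc, ← exp_add]
  congr 2
  field_simp
  ring

theorem integrable_exp_sub_sq_div {v : ℝ} (hv : 0 < v) {q : ℝ → ℝ} {A : ℝ} (hq : Continuous q)
    (hA : ∀ x, |q x| ≤ A) : Integrable fun x => exp ((q x - x ^ 2 / 2) / v) := by
  have hgauss := integrable_exp_neg_mul_sq (b := (2 * v)⁻¹) (by positivity)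
  refine (hgauss.const_mul (exp (A / v))).mono' (by fun_prop) (.of_forall fun x => ?_)
  rw [norm_of_nonneg (exp_pos _).le, ← exp_add, exp_le_exp]
  have hqv : q x / v ≤ A / v := by gcongr; exact (abs_le.1 (hA x)).2
  calc (q x - x ^ 2 / 2) / v = q x / v + -(2 * v)⁻¹ * x ^ 2 := by field_simp; ring
    _ ≤ A / v + -(2 * v)⁻¹ * x ^ 2 := by gcongr

theorem dualTransportInequality_gaussianReal {v : ℝ≥0} (hv : v ≠ 0) :
    DualTransportInequality (gaussianReal 0 v) (gaussianReal 0 1)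
      (fun x y => (x - y) ^ 2 / 2) v ((1 - v + v * log v) / 2) := by
  intro q f A B hq hf hA hB hqf
  have hv₀ : (0 : ℝ) < v := by positivity
  have hfint : Integrable f (gaussianReal 0 1) :=
    .of_bound hf.aestronglyMeasurable B (.of_forall hB)
  have hsq : Integrable (fun y : ℝ => y ^ 2 / 2) (gaussianReal 0 1) :=
    (memLp_id_gaussianReal 2).integrable_sq.div_const 2
  have hψv := integrable_exp_sub_sq_div hv₀ hq hA
  have hline := mul_log_integral_exp_le hv₀ (ψ := fun x => q x - x ^ 2 / 2) (by fun_prop) hψv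
    (hfint.add hsq) fun x y => by
      simp only [Pi.add_apply]
      linarith [hqf x y]
  simp only [Pi.add_apply] at hline
  rw [integral_add hfint hsq, integral_div, integral_sq_gaussianReal] at hline
  rw [freeEnergy, integral_exp_div_gaussianReal hv, log_mul (by positivity)
    (integral_exp_pos hψv).ne', log_inv, log_sqrt (by positivity),
    log_mul (by positivity) hv₀.ne']
  push_cast at hline
  linarith

end GaussianLine

section IsotropicGaussian

theorem pi_withDensity_ofReal {ι : Type*} [Fintype ι] {X : ι → Type*} [∀ i, MeasurableSpace (X i)]
    {μ : ∀ i, Measure (X i)} [∀ i, SigmaFinite (μ i)] {w : ∀ i, X i → ℝ}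
    (hw₀ : ∀ i x, 0 ≤ w i x) (hw : ∀ i, Integrable (w i) (μ i)) :
    Measure.pi (fun i => (μ i).withDensity fun x => ENNReal.ofReal (w i x)) =
      (Measure.pi μ).withDensity fun x => ENNReal.ofReal (∏ i, w i (x i)) := by
  refine Measure.pi_eq fun s hs => ?_
  have hbox : MeasurableSet (univ.pi s) := MeasurableSet.univ_pi hs
  have hw₀' : ∀ i x, 0 ≤ (s i).indicator (w i) x := fun i => indicator_nonneg fun x _ => hw₀ i x
  have hindicator : ∀ x, (univ.pi s).indicator (fun x => ENNReal.ofReal (∏ i, w i (x i))) x =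
      ENNReal.ofReal (∏ i, (s i).indicator (w i) (x i)) := fun x => by
    by_cases hx : x ∈ univ.pi s
    · simp only [indicator_of_mem hx, indicator_of_mem (hx _ (mem_univ _))]
    · obtain ⟨i, hi⟩ : ∃ i, x i ∉ s i := by simpa [mem_univ_pi] using hx
      rw [indicator_of_notMem hx, Finset.prod_eq_zero (Finset.mem_univ i)
        (indicator_of_notMem hi _), ENNReal.ofReal_zero]
  calc (Measure.pi μ).withDensity (fun x => ENNReal.ofReal (∏ i, w i (x i))) (univ.pi s) =
        ∫⁻ x, ENNReal.ofReal (∏ i, (s i).indicator (w i) (x i)) ∂Measure.pi μ := by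
        simp only [withDensity_apply _ hbox, ← lintegral_indicator hbox, hindicator]
    _ = ENNReal.ofReal (∏ i, ∫ x, (s i).indicator (w i) x ∂μ i) := by
        rw [← ofReal_integral_eq_lintegral_ofReal
          (.fintype_prod_dep fun i => (hw i).indicator (hs i))
          (.of_forall fun x => Finset.prod_nonneg fun i _ => hw₀' i _),
          integral_fintype_prod_eq_prod]
    _ = ∏ i, (μ i).withDensity (fun x => ENNReal.ofReal (w i x)) (s i) := by
        rw [ENNReal.ofReal_prod_of_nonneg fun i _ => integral_nonneg (hw₀' i)]
        refine Finset.prod_congr rfl fun i _ => ?_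
        rw [integral_indicator (hs i), withDensity_apply _ (hs i),
          ofReal_integral_eq_lintegral_ofReal (hw i).integrableOn (.of_forall (hw₀ i))]

theorem map_withDensity_comp {X Y : Type*} [MeasurableSpace X] [MeasurableSpace Y] {μ : Measure X}
    {ν : Measure Y} {e : X → Y} (he : MeasurePreserving e μ ν) {w : Y → ENNReal}
    (hw : Measurable w) : (μ.withDensity fun x => w (e x)).map e = ν.withDensity w := by
  ext s hs
  rw [Measure.map_apply he.measurable hs, withDensity_apply _ (he.measurable hs),
    withDensity_apply _ hs, he.setLIntegral_comp_preimage hs hw]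

/-- The centred Gaussian measure on `ℝ^n` with covariance `v` times the identity, transferred to
the Euclidean space from the product of `n` one-dimensional Gaussians of variance `v`. -/
noncomputable def isotropicGaussian (n : ℕ) (v : ℝ≥0) : Measure (EuclideanSpace ℝ (Fin n)) :=
  (Measure.pi fun _ : Fin n => gaussianReal 0 v).map (toLp 2)

variable {n : ℕ} {v : ℝ≥0}

instance isProbabilityMeasure_isotropicGaussian : IsProbabilityMeasure (isotropicGaussian n v) :=
  Measure.isProbabilityMeasure_map (by fun_prop)

theorem prod_gaussianPDFReal (v : ℝ≥0) (x : EuclideanSpace ℝ (Fin n)) :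
    ∏ i, gaussianPDFReal 0 v (x i) =
      (2 * π * v) ^ (-(n : ℝ) / 2) * exp (-‖x‖ ^ 2 / (2 * v)) := by
  simp only [gaussianPDFReal, sub_zero, Finset.prod_mul_distrib, Finset.prod_const,
    Finset.card_univ, Fintype.card_fin, ← exp_sum, ← Finset.sum_div, Finset.sum_neg_distrib,
    EuclideanSpace.real_norm_sq_eq]
  rw [sqrt_eq_rpow, ← rpow_neg (by positivity), ← rpow_mul_natCast (by positivity)]
  ring_nf

theorem isotropicGaussian_eq_withDensity_volume (hv : v ≠ 0) :
    isotropicGaussian n v = volume.withDensity fun x =>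
      ENNReal.ofReal ((2 * π * v) ^ (-(n : ℝ) / 2) * exp (-‖x‖ ^ 2 / (2 * v))) := by
  have hpi : Measure.pi (fun _ : Fin n => gaussianReal 0 v) =
      volume.withDensity fun x => ENNReal.ofReal (∏ i, gaussianPDFReal 0 v (x i)) := by
    simp only [gaussianReal_of_var_ne_zero 0 hv, gaussianPDF_def]
    exact pi_withDensity_ofReal (fun _ => gaussianPDFReal_nonneg 0 v)
      fun _ => integrable_gaussianPDFReal 0 v
  simp only [← prod_gaussianPDFReal]
  rw [isotropicGaussian, hpi]
  exact map_withDensity_comp (PiLp.volume_preserving_toLp (Fin n))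
    (w := fun x => ENNReal.ofReal (∏ i, gaussianPDFReal 0 v (x i))) (by fun_prop)

theorem isotropicGaussian_one (n : ℕ) : isotropicGaussian n 1 = gaussianMeasure n := by
  simp only [isotropicGaussian_eq_withDensity_volume one_ne_zero, gaussianMeasure, NNReal.coe_one,
    mul_one]

instance isGaussian_gaussianMeasure (n : ℕ) : IsGaussian (gaussianMeasure n) := by
  rw [← isotropicGaussian_one, isotropicGaussian, map_pi_eq_stdGaussian]
  infer_instance

theorem isotropicGaussian_eq_withDensity_gaussianMeasure (hv : v ≠ 0) :
    isotropicGaussian n v = (gaussianMeasure n).withDensity fun x =>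
      ENNReal.ofReal (v ^ (-(n : ℝ) / 2) * exp (-((1 - v) / 2 * ‖x‖ ^ 2) / v)) := by
  have hv₀ : (v : ℝ) ≠ 0 := NNReal.coe_ne_zero.2 hv
  rw [isotropicGaussian_eq_withDensity_volume hv, gaussianMeasure,
    ← withDensity_mul _ (by fun_prop) (by fun_prop)]
  congr 1 with x
  rw [Pi.mul_apply, ← ENNReal.ofReal_mul (by positivity), mul_rpow (by positivity) v.coe_nonneg,
    mul_mul_mul_comm, ← exp_add]
  congr 3
  field_simp
  ring

theorem integral_exp_div_isotropicGaussian (hv : v ≠ 0) (q : EuclideanSpace ℝ (Fin n) → ℝ) :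
    ∫ x, exp (q x / v) ∂isotropicGaussian n v =
      v ^ (-(n : ℝ) / 2) * ∫ x, exp ((q x - (1 - v) / 2 * ‖x‖ ^ 2) / v) ∂gaussianMeasure n := by
  rw [isotropicGaussian_eq_withDensity_gaussianMeasure hv,
    integral_withDensity_ofReal (by fun_prop) fun x => by positivity, ← integral_const_mul]
  congr 1 with x
  rw [mul_assoc, ← exp_add]
  ring_nf

theorem integrable_exp_sub_mul_norm_sq_div (hv : v ≠ 0) {q : EuclideanSpace ℝ (Fin n) → ℝ}
    (hq : Integrable (fun x => exp (q x / v)) (isotropicGaussian n v)) :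
    Integrable (fun x => exp ((q x - (1 - v) / 2 * ‖x‖ ^ 2) / v)) (gaussianMeasure n) := by
  have hv₀ : (0 : ℝ) < v := by positivity
  rw [isotropicGaussian_eq_withDensity_gaussianMeasure hv,
    integrable_withDensity_ofReal_iff (by fun_prop) fun x => by positivity] at hq
  refine (hq.const_mul (v ^ (-(n : ℝ) / 2) : ℝ)⁻¹).congr (.of_forall fun x => ?_)
  simp only [mul_assoc, ← exp_add]
  rw [inv_mul_cancel_left₀ (by positivity)]
  ring_nf

theorem dualTransportInequality_isotropicGaussian (hv : v ≠ 0) (n : ℕ) :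
    DualTransportInequality (isotropicGaussian n v) (gaussianMeasure n)
      (fun x y => ‖x - y‖ ^ 2 / 2) v (n * ((1 - v + v * log v) / 2)) := by
  rw [← isotropicGaussian_one]
  refine ((dualTransportInequality_gaussianReal hv).pi (by positivity) n).map (by fun_prop)
    (by fun_prop) fun x y => ?_
  simp only [EuclideanSpace.real_norm_sq_eq, PiLp.sub_apply, Finset.sum_div, le_refl]

end IsotropicGaussian

section QuadraticGrowth

variable {E F : Type*} [NormedAddCommGroup E] [NormedSpace ℝ E] [NormedAddCommGroup F]
  [NormedSpace ℝ F] {g : E → F} {C : ℝ}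

theorem norm_fderiv_fderiv_eq_norm_iteratedFDeriv_two (g : E → F) (x : E) :
    ‖fderiv ℝ (fderiv ℝ g) x‖ = ‖iteratedFDeriv ℝ 2 g x‖ := by
  rw [← norm_iteratedFDeriv_fderiv, ← norm_iteratedFDeriv_one]

theorem norm_fderiv_sub_fderiv_zero_le (hdg : Differentiable ℝ (fderiv ℝ g))
    (hC : ∀ x, ‖fderiv ℝ (fderiv ℝ g) x‖ ≤ C) (x : E) :
    ‖fderiv ℝ g x - fderiv ℝ g 0‖ ≤ C * ‖x‖ := by
  simpa only [sub_zero] using convex_univ.norm_image_sub_le_of_norm_fderiv_le (𝕜 := ℝ)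
    (fun y _ => hdg y) (fun y _ => hC y) (mem_univ 0) (mem_univ x)

theorem norm_sub_sub_fderiv_zero_le (hg : Differentiable ℝ g)
    (hdg : Differentiable ℝ (fderiv ℝ g)) (hC : ∀ x, ‖fderiv ℝ (fderiv ℝ g) x‖ ≤ C) (x : E) :
    ‖g x - g 0 - fderiv ℝ g 0 x‖ ≤ C * ‖x‖ ^ 2 := by
  have hC₀ : 0 ≤ C := (norm_nonneg (fderiv ℝ (fderiv ℝ g) 0)).trans (hC 0)
  have hbound : ∀ y ∈ Metric.closedBall (0 : E) ‖x‖,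
      ‖fderiv ℝ g y - fderiv ℝ g 0‖ ≤ C * ‖x‖ := fun y hy =>
    (norm_fderiv_sub_fderiv_zero_le hdg hC y).trans <| by
      gcongr
      exact mem_closedBall_zero_iff.1 hy
  simpa only [sub_zero, mul_assoc, ← sq] using
    (convex_closedBall (0 : E) ‖x‖).norm_image_sub_le_of_norm_fderiv_le' (fun y _ => hg y) hbound
      (Metric.mem_closedBall_self (norm_nonneg x)) (mem_closedBall_zero_iff.2 le_rfl)

end QuadraticGrowth

section SecondOrderIntegrationByParts

variable {n : ℕ} {g : EuclideanSpace ℝ (Fin n) → ℝ} {C : ℝ}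

theorem memLp_sq_of_memLp_two_mul {X : Type*} [MeasurableSpace X] {μ : Measure X} {φ : X → ℝ}
    {p : ENNReal} (hφ : MemLp φ (2 * p) μ) : MemLp (fun x => φ x ^ 2) p μ := by
  simpa [ENNReal.mul_div_right_comm, ENNReal.div_self] using hφ.norm_rpow_div 2

theorem memLp_norm_gaussianMeasure {p : ENNReal} (hp : p ≠ ⊤) :
    MemLp (fun x => ‖x‖) p (gaussianMeasure n) :=
  (IsGaussian.memLp_id (gaussianMeasure n) p hp).norm

theorem memLp_norm_sq_gaussianMeasure {p : ENNReal} (hp : p ≠ ⊤) :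
    MemLp (fun x => ‖x‖ ^ 2) p (gaussianMeasure n) :=
  memLp_sq_of_memLp_two_mul (memLp_norm_gaussianMeasure (ENNReal.mul_ne_top (by simp) hp))

theorem memLp_inner_gaussianMeasure {p : ENNReal} (hp : p ≠ ⊤) (e : EuclideanSpace ℝ (Fin n)) :
    MemLp (fun x => ⟪x, e⟫) p (gaussianMeasure n) :=
  (IsGaussian.memLp_dual (gaussianMeasure n) (innerSL ℝ e) p hp).ae_eq
    (.of_forall fun x => real_inner_comm x e)

theorem memLp_fderiv_apply_of_norm_fderiv_fderiv_le {p : ENNReal} (hp : p ≠ ⊤)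
    (hdg : Differentiable ℝ (fderiv ℝ g))
    (hC : ∀ x, ‖fderiv ℝ (fderiv ℝ g) x‖ ≤ C) (e : EuclideanSpace ℝ (Fin n)) :
    MemLp (fun x => fderiv ℝ g x e) p (gaussianMeasure n) := by
  have hsub : MemLp (fun x => (fderiv ℝ g x - fderiv ℝ g 0) e) p (gaussianMeasure n) :=
    (((memLp_norm_gaussianMeasure hp).const_mul C).mul_const ‖e‖).mono'
      (((hdg.continuous.sub continuous_const).clm_apply
        continuous_const).measurable.aestronglyMeasurable)
      (.of_forall fun x =>
        ContinuousLinearMap.le_of_opNorm_le _ (norm_fderiv_sub_fderiv_zero_le hdg hC x) e)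
  refine (hsub.add (memLp_const (fderiv ℝ g 0 e))).ae_eq (.of_forall fun x => ?_)
  simp only [Pi.add_apply, sub_apply, sub_add_cancel]

theorem memLp_of_norm_fderiv_fderiv_le {p : ENNReal} (hp : p ≠ ⊤) (hg : Differentiable ℝ g)
    (hdg : Differentiable ℝ (fderiv ℝ g)) (hC : ∀ x, ‖fderiv ℝ (fderiv ℝ g) x‖ ≤ C) :
    MemLp g p (gaussianMeasure n) := by
  have hlinear := IsGaussian.memLp_dual (gaussianMeasure n) (fderiv ℝ g 0) p hp
  have hremainder : MemLp (fun x => g x - g 0 - fderiv ℝ g 0 x) p (gaussianMeasure n) :=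
    ((memLp_norm_sq_gaussianMeasure hp).const_mul C).mono'
      ((hg.continuous.sub continuous_const).sub
        (fderiv ℝ g 0).continuous).measurable.aestronglyMeasurable
      (.of_forall (norm_sub_sub_fderiv_zero_le hg hdg hC))
  refine ((hremainder.add hlinear).add (memLp_const (g 0))).ae_eq (.of_forall fun x => ?_)
  simp only [Pi.add_apply, sub_add_cancel]

theorem integrable_inner_sq_mul (hg : MemLp g 2 (gaussianMeasure n))
    (e : EuclideanSpace ℝ (Fin n)) :
    Integrable (fun x => ⟪x, e⟫ ^ 2 * g x) (gaussianMeasure n) :=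
  (memLp_sq_of_memLp_two_mul
    (memLp_inner_gaussianMeasure (p := 2 * 2) (by simp [ENNReal.mul_eq_top]) e)).integrable_mul hg

theorem integral_fderiv_fderiv_gaussianMeasure (hg : Differentiable ℝ g)
    (hdg : Differentiable ℝ (fderiv ℝ g)) (hg₂ : MemLp g 2 (gaussianMeasure n))
    {e : EuclideanSpace ℝ (Fin n)} (hdg₂ : MemLp (fun x => fderiv ℝ g x e) 2 (gaussianMeasure n))
    (hddg : Integrable (fun x => fderiv ℝ (fderiv ℝ g) x e e) (gaussianMeasure n)) :
    ∫ x, fderiv ℝ (fderiv ℝ g) x e e ∂gaussianMeasure n =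
      ∫ x, ⟪x, e⟫ ^ 2 * g x ∂gaussianMeasure n - ‖e‖ ^ 2 * ∫ x, g x ∂gaussianMeasure n := by
  have hdensity : gaussianMeasure n = volume.withDensity fun x =>
      ENNReal.ofReal ((2 * π) ^ (-(n : ℝ) / 2) * exp (-‖x‖ ^ 2 / 2)) := rfl
  have hinner : Differentiable ℝ fun x : EuclideanSpace ℝ (Fin n) => ⟪x, e⟫ :=
    differentiable_id.inner ℝ (differentiable_const e)
  have hinner₂ : MemLp (fun x => ⟪x, e⟫) 2 (gaussianMeasure n) :=
    memLp_inner_gaussianMeasure (by simp) e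
  have hgint : Integrable (fun x => ‖e‖ ^ 2 * g x) (gaussianMeasure n) :=
    (hg₂.integrable one_le_two).const_mul _
  have hfirst : Integrable (fun x => ⟪x, e⟫ * fderiv ℝ g x e) (gaussianMeasure n) :=
    hinner₂.integrable_mul hdg₂
  have hsecond := integrable_inner_sq_mul hg₂ e
  simp only [sq ⟪_, e⟫, mul_assoc] at hsecond
  have hderiv : ∀ x, fderiv ℝ (fun x => fderiv ℝ g x e) x e = fderiv ℝ (fderiv ℝ g) x e e :=
    fun x => by simp [fderiv_clm_apply (hdg x) (differentiableAt_const e)]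
  have hderiv_mul : ∀ x,
      fderiv ℝ (fun x => ⟪x, e⟫ * g x) x e = ‖e‖ ^ 2 * g x + ⟪x, e⟫ * fderiv ℝ g x e := fun x => by
    rw [fderiv_fun_mul (hinner x) (hg x)]
    simp [fderiv_inner_apply, mul_comm, add_comm]
  have hibp := integral_fderiv_eq_integral_inner_mul (by positivity) hdensity
    (fun x => (hdg x).clm_apply (differentiableAt_const e)) (hdg₂.integrable one_le_two)
    (by simpa only [hderiv] using hddg) hfirst
  have hibp_mul := integral_fderiv_eq_integral_inner_mul (by positivity) hdensity
    (hinner.fun_mul hg) (hinner₂.integrable_mul hg₂)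
    (by simpa only [hderiv_mul] using! hgint.add hfirst) hsecond
  simp only [hderiv] at hibp
  simp only [hderiv_mul, integral_add hgint hfirst, integral_const_mul] at hibp_mul
  simp only [sq ⟪_, e⟫, mul_assoc, hibp, ← hibp_mul, add_sub_cancel_left]

theorem integrable_fderiv_fderiv_gaussianMeasure (hg : ContDiff ℝ 2 g)
    (hC : ∀ x, ‖fderiv ℝ (fderiv ℝ g) x‖ ≤ C) (e : EuclideanSpace ℝ (Fin n)) :
    Integrable (fun x => fderiv ℝ (fderiv ℝ g) x e e) (gaussianMeasure n) := by
  have hcont : Continuous (fderiv ℝ (fderiv ℝ g)) :=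
    (hg.fderiv_right (m := 1) (by norm_num)).continuous_fderiv (by norm_num)
  refine .of_bound
    ((hcont.clm_apply continuous_const).clm_apply continuous_const).aestronglyMeasurable
    (C * ‖e‖ * ‖e‖) (.of_forall fun x => ?_)
  exact ((fderiv ℝ (fderiv ℝ g) x e).le_of_opNorm_le
    ((fderiv ℝ (fderiv ℝ g) x).le_of_opNorm_le (hC x) e) e)

theorem integral_laplacian_gaussianMeasure (hg : ContDiff ℝ 2 g)
    (hC : ∀ x, ‖fderiv ℝ (fderiv ℝ g) x‖ ≤ C) :
    ∫ x, laplacian n g x ∂gaussianMeasure n =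
      ∫ x, ‖x‖ ^ 2 * g x ∂gaussianMeasure n - n * ∫ x, g x ∂gaussianMeasure n := by
  have hg₁ : Differentiable ℝ g := hg.differentiable (by norm_num)
  have hdg : Differentiable ℝ (fderiv ℝ g) :=
    (hg.fderiv_right (m := 1) (by norm_num)).differentiable (by norm_num)
  have hg₂ : MemLp g 2 (gaussianMeasure n) :=
    memLp_of_norm_fderiv_fderiv_le (by simp) hg₁ hdg hC
  have hnorm : ∀ x : EuclideanSpace ℝ (Fin n),
      ‖x‖ ^ 2 * g x = ∑ i, ⟪x, EuclideanSpace.single i 1⟫ ^ 2 * g x := fun x => by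
    simp [EuclideanSpace.real_norm_sq_eq, EuclideanSpace.inner_single_right, Finset.sum_mul]
  simp only [laplacian, hnorm]
  rw [integral_finsetSum _ fun i _ => integrable_fderiv_fderiv_gaussianMeasure hg hC _,
    integral_finsetSum _ fun i _ => integrable_inner_sq_mul hg₂ _]
  simp only [integral_fderiv_fderiv_gaussianMeasure hg₁ hdg hg₂
    (memLp_fderiv_apply_of_norm_fderiv_fderiv_le (by simp) hdg hC _)
    (integrable_fderiv_fderiv_gaussianMeasure hg hC _)]
  simp

end SecondOrderIntegrationByParts

section Entropy

variable {X : Type*} [MeasurableSpace X] {μ : Measure X} {g u : X → ℝ}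

theorem integrable_mul_log_of_memLp_two [IsFiniteMeasure μ] (hg₀ : ∀ x, 0 ≤ g x)
    (hg : MemLp g 2 μ) : Integrable (fun x => g x * log (g x)) μ := by
  refine (hg.integrable_sq.add (integrable_const 1)).mono'
    (continuous_mul_log.comp_aestronglyMeasurable hg.aestronglyMeasurable)
    (.of_forall fun x => ?_)
  have hlower := negMulLog_le_one_sub_self (hg₀ x)
  have hupper := mul_le_mul_of_nonneg_left (log_le_self (hg₀ x)) (hg₀ x)
  rw [negMulLog] at hlower
  rw [Pi.add_apply, norm_eq_abs, abs_le]
  constructor <;> nlinarith [hg₀ x, sq_nonneg (g x)]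

theorem integral_mul_le_integral_mul_log_add_log_integral_exp (hg₀ : ∀ x, 0 ≤ g x)
    (hg₁ : ∫ x, g x ∂μ = 1) (hent : Integrable (fun x => g x * log (g x)) μ)
    (hug : Integrable (fun x => u x * g x) μ) (hexp : Integrable (fun x => exp (u x)) μ) :
    ∫ x, u x * g x ∂μ ≤ ∫ x, g x * log (g x) ∂μ + log (∫ x, exp (u x) ∂μ) := by
  have hg : Integrable g μ := .of_integral_ne_zero (hg₁ ▸ one_ne_zero)
  have : NeZero μ := ⟨by rintro rfl; simp at hg₁⟩
  set Z := ∫ x, exp (u x) ∂μ with hZ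
  have hZ₀ : 0 < Z := integral_exp_pos hexp
  have hyoung : ∀ x, u x * g x ≤ g x * log (g x) + (log Z - 1) * g x + exp (u x) / Z := fun x => by
    rcases (hg₀ x).eq_or_lt with hgx | hgx
    · simpa [← hgx] using div_nonneg (exp_pos (u x)).le hZ₀.le
    · have htangent := add_one_le_exp (u x - log Z - log (g x))
      rw [exp_sub, exp_sub, exp_log hZ₀, exp_log hgx, le_div_iff₀ hgx] at htangent
      linarith
  have hsum : Integrable (fun x => g x * log (g x) + (log Z - 1) * g x) μ :=
    hent.add (hg.const_mul _)
  calc ∫ x, u x * g x ∂μ ≤ ∫ x, (g x * log (g x) + (log Z - 1) * g x + exp (u x) / Z) ∂μ :=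
        integral_mono hug (hsum.add (hexp.div_const Z)) hyoung
    _ = ∫ x, g x * log (g x) ∂μ + log Z := by
        rw [integral_add hsum (hexp.div_const Z), integral_add hent (hg.const_mul _),
          integral_const_mul, integral_div, hg₁, ← hZ, div_self hZ₀.ne']
        ring

end Entropy

section RefinedTalagrand

variable {n : ℕ} {f g : EuclideanSpace ℝ (Fin n) → ℝ} {v : ℝ≥0} {C : ℝ}

theorem integrable_exp_hopfLax_sub_mul_norm_sq_div (hv : v ≠ 0) (hfC : ∀ x, |f x| ≤ C) :
    Integrable (fun x => exp ((hopfLax n 1 f x - (1 - v) / 2 * ‖x‖ ^ 2) / v))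
      (gaussianMeasure n) :=
  integrable_exp_sub_mul_norm_sq_div hv <| integrable_exp_div_of_abs_le (by positivity)
    (continuous_hopfLax one_pos (bddBelow_range_of_abs_le hfC)).measurable
    (abs_hopfLax_le one_pos hfC)

theorem mul_log_integral_exp_hopfLax_le (hv : v ≠ 0) (hf : Measurable f)
    (hfC : ∀ x, |f x| ≤ C) :
    v * log (∫ x, exp ((hopfLax n 1 f x - (1 - v) / 2 * ‖x‖ ^ 2) / v) ∂gaussianMeasure n) ≤
      ∫ x, f x ∂gaussianMeasure n + n * ((1 - v) / 2 + v * log v) := by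
  have hv₀ : (0 : ℝ) < v := by positivity
  have hbdd := bddBelow_range_of_abs_le hfC
  have hadmissible : ∀ x y, hopfLax n 1 f x - f y ≤ ‖x - y‖ ^ 2 / 2 := fun x y => by
    simpa only [mul_one, sub_le_iff_le_add'] using hopfLax_le one_pos hbdd x y
  have hdual := dualTransportInequality_isotropicGaussian hv n (continuous_hopfLax one_pos hbdd)
    hf (abs_hopfLax_le one_pos hfC) hfC hadmissible
  rw [freeEnergy, integral_exp_div_isotropicGaussian hv, log_mul (by positivity)
    (integral_exp_pos (integrable_exp_hopfLax_sub_mul_norm_sq_div hv hfC)).ne',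
    log_rpow hv₀] at hdual
  linarith

theorem integral_hopfLax_mul_sub_integral_norm_sq_mul_le (hv : v ≠ 0) (hf : Measurable f)
    (hfC : ∀ x, |f x| ≤ C) (hg₀ : ∀ x, 0 ≤ g x) (hg₂ : MemLp g 2 (gaussianMeasure n))
    (hg₁ : ∫ x, g x ∂gaussianMeasure n = 1) :
    ∫ x, hopfLax n 1 f x * g x ∂gaussianMeasure n -
        (1 - v) / 2 * ∫ x, ‖x‖ ^ 2 * g x ∂gaussianMeasure n ≤
      v * ∫ x, g x * log (g x) ∂gaussianMeasure n + ∫ x, f x ∂gaussianMeasure n +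
        n * ((1 - v) / 2 + v * log v) := by
  have hv₀ : (0 : ℝ) < v := by positivity
  let u : EuclideanSpace ℝ (Fin n) → ℝ := fun x =>
    (hopfLax n 1 f x - (1 - v) / 2 * ‖x‖ ^ 2) / v
  have hQg : Integrable (fun x => hopfLax n 1 f x * g x) (gaussianMeasure n) :=
    (hg₂.integrable one_le_two).bdd_mul
      (continuous_hopfLax one_pos (bddBelow_range_of_abs_le hfC)).aestronglyMeasurable
      (.of_forall (abs_hopfLax_le one_pos hfC))
  have hsq : Integrable (fun x => (1 - v) / 2 * (‖x‖ ^ 2 * g x)) (gaussianMeasure n) :=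
    ((memLp_norm_sq_gaussianMeasure (p := 2) (by simp)).integrable_mul hg₂).const_mul _
  have hu : ∀ x, u x * g x =
      (hopfLax n 1 f x * g x - (1 - v) / 2 * (‖x‖ ^ 2 * g x)) / v := fun x => by ring
  have hgibbs := integral_mul_le_integral_mul_log_add_log_integral_exp hg₀ hg₁
    (integrable_mul_log_of_memLp_two hg₀ hg₂) (u := u)
    (by simpa only [hu] using! (hQg.sub hsq).div_const (v : ℝ))
    (integrable_exp_hopfLax_sub_mul_norm_sq_div hv hfC)
  simp only [hu, integral_div, integral_sub hQg hsq, integral_const_mul] at hgibbs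
  rw [div_le_iff₀' hv₀] at hgibbs
  linarith [mul_log_integral_exp_hopfLax_le (n := n) hv hf hfC]

end RefinedTalagrand

theorem refined_talagrand_dual_form_general {n : ℕ} {lam : ℝ} (hlam : 0 < lam)
    {f : EuclideanSpace ℝ (Fin n) → ℝ} (hf : Measurable f) {Cf : ℝ} (hbdf : ∀ x, |f x| ≤ Cf)
    {g : EuclideanSpace ℝ (Fin n) → ℝ} (hg : ContDiff ℝ 2 g) (hg₀ : ∀ x, 0 ≤ g x) {C₂ : ℝ}
    (hder : ∀ x, ‖iteratedFDeriv ℝ 2 g x‖ ≤ C₂) (hmass : ∫ x, g x ∂gaussianMeasure n = 1) :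
    ∫ x, hopfLax n 1 f x * g x ∂gaussianMeasure n - ∫ x, f x ∂gaussianMeasure n ≤
      lam * ∫ x, g x * log (g x) ∂gaussianMeasure n + n * (1 - lam + lam * log lam) +
        (1 / 2) * (1 - lam) * ∫ x, laplacian n g x ∂gaussianMeasure n := by
  lift lam to ℝ≥0 using hlam.le with v
  simp only [← norm_fderiv_fderiv_eq_norm_iteratedFDeriv_two] at hder
  have hg₂ : MemLp g 2 (gaussianMeasure n) :=
    memLp_of_norm_fderiv_fderiv_le (by simp) (hg.differentiable (by norm_num))
      ((hg.fderiv_right (m := 1) (by norm_num)).differentiable (by norm_num)) hder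
  have hmain := integral_hopfLax_mul_sub_integral_norm_sq_mul_le (NNReal.coe_pos.1 hlam).ne' hf
    hbdf hg₀ hg₂ hmass
  rw [integral_laplacian_gaussianMeasure hg hder, hmass]
  linarith

theorem refined_talagrand_dual_form (n : ℕ) (hn : 1 ≤ n) (lam : ℝ) (hlam : 0 < lam)
    (f : EuclideanSpace ℝ (Fin n) → ℝ) (L : NNReal) (hLip : LipschitzWith L f)
    (Cf : ℝ) (hbdf : ∀ x, |f x| ≤ Cf)
    (g : EuclideanSpace ℝ (Fin n) → ℝ) (hg : ContDiff ℝ (⊤ : ℕ∞) g)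
    (hgpos : ∀ x, 0 < g x) (Cg : ℝ) (hbdg : ∀ x, g x ≤ Cg)
    (C₂ : ℝ) (hder : ∀ x, ‖iteratedFDeriv ℝ 2 g x‖ ≤ C₂)
    (hmass : ∫ x, g x ∂(gaussianMeasure n) = 1) :
    ∫ x, hopfLax n 1 f x * g x ∂(gaussianMeasure n) - ∫ x, f x ∂(gaussianMeasure n) ≤
      lam * ∫ x, g x * Real.log (g x) ∂(gaussianMeasure n) +
        n * (1 - lam + lam * Real.log lam) +
        (1 / 2) * (1 - lam) * ∫ x, laplacian n g x ∂(gaussianMeasure n) :=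
  refined_talagrand_dual_form_general hlam hLip.continuous.measurable hbdf
    (contDiff_infty.mp hg 2) (fun x => (hgpos x).le) hder hmass
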